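/- Let A be a finite-dimensional real affine space over V, let g ≠ 0 be a symmetric bilinear form on V, and let CM_g be the Cayley–Menger form of g. Then for every point P ∈ A and every linear functional φ on W_g: CM_g(ev_P, φ) = φ(δ^g_P), where δ^g_P ∈ W_g is the function δ^g_P(X) = (1/2)·g(X − P, X − P). -/

import Mathlib

/-!
Evaluations span the dual of `W_g`: choosing an origin, every element of `W_g` is a constant plus a
linear functional plus a multiple of the quadratic form of `g`
(`exists_linear_of_isHessianOf`), so `W_g` is finite-dimensional, and a function all of whose values
vanish is zero (`span_evW`). Both sides of the identity are linear in `φ`, so it suffices to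
take `φ = ev_Q`. There, `-g(Q - P, Q - P) = CM_g(ev_Q - ev_P, ev_Q - ev_P) = -2 CM_g(ev_P, ev_Q)`
because evaluations are isotropic (`cayleyMenger_evW_evW`), which is the claim
`CM_g(ev_P, ev_Q) = δ^g_P(Q)`.
-/

/-- A function `δ : A → ℝ` on a real affine space is *quadratic* if for all points
`P, Q` and all `α, β ∈ ℝ` with `α + β = 1`,
`δ(α·P + β·Q) = α(α−β)·δ(P) + β(β−α)·δ(Q) + 4αβ·δ(midpoint(P,Q))`. -/
def IsQuadraticFn {V A : Type*} [AddCommGroup V] [Module ℝ V] [AddTorsor V A]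
    (δ : A → ℝ) : Prop :=
  ∀ (P Q : A) (α β : ℝ), α + β = 1 →
    δ (AffineMap.lineMap P Q β) =
      α * (α - β) * δ P + β * (β - α) * δ Q + 4 * α * β * δ (midpoint ℝ P Q)

/-- `B` is the Hessian of `δ`. -/
def IsHessianOf {V A : Type*} [AddCommGroup V] [Module ℝ V] [AddTorsor V A]
    (δ : A → ℝ) (B : LinearMap.BilinForm ℝ V) : Prop :=
  ∀ P Q : A, 2 * δ P + 2 * δ Q - 4 * δ (midpoint ℝ P Q) =
    (1/2 : ℝ) * B (Q -ᵥ P) (Q -ᵥ P)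

/-- `W_g`: the space of quadratic functions `A → ℝ` whose Hessian is a scalar
multiple of `g`, as a submodule of `A → ℝ`. -/
def Wg {V : Type*} [AddCommGroup V] [Module ℝ V]
    (g : LinearMap.BilinForm ℝ V) (A : Type*) [AddTorsor V A] :
    Submodule ℝ (A → ℝ) where
  carrier := {δ : A → ℝ | IsQuadraticFn δ ∧ ∃ c : ℝ, IsHessianOf δ (c • g)}
  add_mem' := by
    rintro a b ⟨ha1, ca, ha2⟩ ⟨hb1, cb, hb2⟩
    refine ⟨fun P Q α β h => ?_, ca + cb, fun P Q => ?_⟩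
    · have h1 := ha1 P Q α β h
      have h2 := hb1 P Q α β h
      simp only [Pi.add_apply]
      linear_combination h1 + h2
    · have h1 := ha2 P Q
      have h2 := hb2 P Q
      simp only [Pi.add_apply, LinearMap.add_apply, LinearMap.smul_apply,
        smul_eq_mul] at h1 h2 ⊢
      linear_combination h1 + h2
  zero_mem' := by
    refine ⟨fun P Q α β h => ?_, 0, fun P Q => ?_⟩
    · simp only [Pi.zero_apply]; ring
    · simp only [Pi.zero_apply, zero_smul, LinearMap.zero_apply]; ring
  smul_mem' := by
    rintro c a ⟨ha1, ca, ha2⟩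
    refine ⟨fun P Q α β h => ?_, c * ca, fun P Q => ?_⟩
    · have h1 := ha1 P Q α β h
      simp only [Pi.smul_apply, smul_eq_mul]
      linear_combination c * h1
    · have h1 := ha2 P Q
      simp only [Pi.smul_apply, smul_eq_mul, LinearMap.smul_apply] at h1 ⊢
      linear_combination c * h1

/-- The evaluation functional `ev_P : W_g → ℝ` at a point `P`. -/
def evW {V : Type*} [AddCommGroup V] [Module ℝ V]
    (g : LinearMap.BilinForm ℝ V) {A : Type*} [AddTorsor V A] (P : A) :
    Module.Dual ℝ (Wg g A) where
  toFun δ := (δ : A → ℝ) P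
  map_add' x y := rfl
  map_smul' c x := rfl

/-- `φ` annihilates the constant function `1 ∈ W_g`. -/
def AnnihilatesOne {V : Type*} [AddCommGroup V] [Module ℝ V]
    (g : LinearMap.BilinForm ℝ V) {A : Type*} [AddTorsor V A]
    (φ : Module.Dual ℝ (Wg g A)) : Prop :=
  ∀ h1 : (fun _ : A => (1 : ℝ)) ∈ Wg g A, φ ⟨fun _ => (1 : ℝ), h1⟩ = 0

/-- `x ∈ V` represents the functional `φ` on `W_g`: for every affine function
`f : A → ℝ` (an element of `W_g`), `φ(f) = (linear part of f)(x)`. -/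
def Represents {V : Type*} [AddCommGroup V] [Module ℝ V]
    (g : LinearMap.BilinForm ℝ V) {A : Type*} [AddTorsor V A]
    (φ : Module.Dual ℝ (Wg g A)) (x : V) : Prop :=
  ∀ (f : A →ᵃ[ℝ] ℝ) (hf : ⇑f ∈ Wg g A), φ ⟨⇑f, hf⟩ = f.linear x

/-- `C` is a Cayley–Menger form for `g`: a symmetric bilinear form on the dual of
`W_g` such that (i) every evaluation functional `ev_P` is isotropic, and (ii) on
functionals annihilating the constant `1`, `C(φ, ψ) = −g(x_φ, x_ψ)`. -/
def IsCayleyMenger {V : Type*} [AddCommGroup V] [Module ℝ V]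
    (g : LinearMap.BilinForm ℝ V) (A : Type*) [AddTorsor V A]
    (C : LinearMap.BilinForm ℝ (Module.Dual ℝ (Wg g A))) : Prop :=
  (∀ φ ψ, C φ ψ = C ψ φ) ∧
  (∀ P : A, C (evW g P) (evW g P) = 0) ∧
  (∀ (φ ψ : Module.Dual ℝ (Wg g A)) (x y : V),
    AnnihilatesOne g φ → AnnihilatesOne g ψ →
    Represents g φ x → Represents g ψ y → C φ ψ = - g x y)

/-- A function in `W_g` with Hessian `c • g` is, after choosing an origin `P`, the sum of a constant,
a linear functional, and `c/2` times the quadratic form of `g`. -/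
theorem exists_linear_of_isHessianOf {V A : Type*} [AddCommGroup V] [Module ℝ V] [AddTorsor V A]
    (g : LinearMap.BilinForm ℝ V) (P : A) (δ : A → ℝ) (c : ℝ)
    (hq : IsQuadraticFn δ) (hH : IsHessianOf δ (c • g)) :
    ∃ L : Module.Dual ℝ V, ∀ v : V,
      δ (v +ᵥ P) = δ P + L v + c / 2 * g v v := by
  have hsmul : ∀ (t : ℝ) (v : V),
      δ ((t • v) +ᵥ P) - δ P - c / 2 * g (t • v) (t • v) =
        t * (δ (v +ᵥ P) - δ P - c / 2 * g v v) := by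
    intro t v
    have h1 := hq P (v +ᵥ P) (1 - t) t (by ring)
    have h2 := hH P (v +ᵥ P)
    simp only [AffineMap.lineMap_apply, vadd_vsub, LinearMap.smul_apply, smul_eq_mul,
      map_smul] at h1 h2 ⊢
    linear_combination h1 + t * (t - 1) * h2
  have hadd : ∀ a b : V,
      δ ((a + b) +ᵥ P) - δ P - c / 2 * g (a + b) (a + b) =
        (δ (a +ᵥ P) - δ P - c / 2 * g a a) + (δ (b +ᵥ P) - δ P - c / 2 * g b b) := by
    intro a b
    -- `a + b` is twice the midpoint of `a` and `b`, and the Hessian controls midpoints.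
    have h1 := hsmul (1 / 2) (a + b)
    have h2 := hH (a +ᵥ P) (b +ᵥ P)
    have hmid : midpoint ℝ (a +ᵥ P) (b +ᵥ P) = ((1 / 2 : ℝ) • (a + b)) +ᵥ P := by
      conv_rhs => rw [← midpoint_self ℝ P]
      rw [← midpoint_vadd_midpoint, midpoint_eq_smul_add, invOf_eq_inv, one_div]
    rw [hmid, vadd_vsub_vadd_cancel_right] at h2
    simp only [LinearMap.smul_apply, smul_eq_mul, map_smul, map_add, map_sub,
      LinearMap.add_apply, LinearMap.sub_apply] at h1 h2 ⊢
    linear_combination (-2) * h1 - (1 / 2) * h2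
  refine ⟨{ toFun := fun v => δ (v +ᵥ P) - δ P - c / 2 * g v v
            map_add' := hadd
            map_smul' := hsmul }, fun v => ?_⟩
  simp only [LinearMap.coe_mk, AddHom.coe_mk]
  ring

theorem finiteDimensional_Wg {V A : Type*} [AddCommGroup V] [Module ℝ V] [AddTorsor V A]
    [FiniteDimensional ℝ V] (g : LinearMap.BilinForm ℝ V) (P : A) :
    FiniteDimensional ℝ (Wg g A) := by
  let T : (Module.Dual ℝ V × ℝ × ℝ) →ₗ[ℝ] (A → ℝ) :=
    { toFun := fun p X => p.2.1 + p.1 (X -ᵥ P) + p.2.2 / 2 * g (X -ᵥ P) (X -ᵥ P)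
      map_add' := fun p q => by
        funext X
        simp only [Prod.fst_add, Prod.snd_add, LinearMap.add_apply, Pi.add_apply]
        ring
      map_smul' := fun t p => by
        funext X
        simp only [Prod.smul_fst, Prod.smul_snd, LinearMap.smul_apply, Pi.smul_apply,
          smul_eq_mul, RingHom.id_apply]
        ring }
  have hle : Wg g A ≤ LinearMap.range T := by
    rintro δ ⟨hq, c, hH⟩
    obtain ⟨L, hL⟩ := exists_linear_of_isHessianOf g P δ c hq hH
    refine ⟨(L, δ P, c), ?_⟩
    funext X
    have h := hL (X -ᵥ P)
    rw [vsub_vadd] at h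
    exact h.symm
  exact Submodule.finiteDimensional_of_le hle

/-- An element of `W_g` killed by every evaluation is zero, and `W_g` is finite-dimensional, so
the evaluations span its dual. -/
theorem span_evW {V A : Type*} [AddCommGroup V] [Module ℝ V] [AddTorsor V A]
    [FiniteDimensional ℝ V] (g : LinearMap.BilinForm ℝ V) :
    Submodule.span ℝ (Set.range (evW g : A → Module.Dual ℝ (Wg g A))) = ⊤ := by
  have P : A := Classical.choice AddTorsor.nonempty
  have := finiteDimensional_Wg g P
  refine Submodule.span_eq_top_of_ne_zero fun δ hδ => ?_
  by_contra! h
  exact hδ (Subtype.ext (funext fun X => h _ ⟨X, rfl⟩))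

/-- The Gram matrix of the evaluations: polarize `C` using that `ev_Q - ev_P` annihilates `1`, is
represented by `Q - P`, and that both evaluations are isotropic. -/
theorem cayleyMenger_evW_evW {V A : Type*} [AddCommGroup V] [Module ℝ V] [AddTorsor V A]
    (g : LinearMap.BilinForm ℝ V)
    (C : LinearMap.BilinForm ℝ (Module.Dual ℝ (Wg g A)))
    (hC : IsCayleyMenger g A C) (P Q : A) :
    C (evW g P) (evW g Q) = (1 / 2 : ℝ) * g (Q -ᵥ P) (Q -ᵥ P) := by
  obtain ⟨hsymm, hiso, hann⟩ := hC
  have h1 : AnnihilatesOne g (evW g Q - evW g P) := fun _ => sub_self (1 : ℝ)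
  have h2 : Represents g (evW g Q - evW g P) (Q -ᵥ P) := fun f _ =>
    (f.linearMap_vsub Q P).symm
  have h := hann _ _ _ _ h1 h1 h2 h2
  simp only [map_sub, LinearMap.sub_apply, hiso, hsymm (evW g Q) (evW g P)] at h
  linarith

/-- For the Cayley–Menger form `C = CM_g` of a nonzero symmetric
bilinear form `g`, for every point `P` and every functional `φ` on `W_g`:
`C(ev_P, φ) = φ(δ^g_P)`, where `δ^g_P(X) = (1/2)·g(X − P, X − P)` (an element of
`W_g`). -/
theorem stmt16 {V A : Type*} [AddCommGroup V] [Module ℝ V] [AddTorsor V A]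
    [FiniteDimensional ℝ V]
    (g : LinearMap.BilinForm ℝ V) (hgs : ∀ x y, g x y = g y x) (hg0 : g ≠ 0)
    (C : LinearMap.BilinForm ℝ (Module.Dual ℝ (Wg g A)))
    (hC : IsCayleyMenger g A C) :
    ∀ (P : A) (φ : Module.Dual ℝ (Wg g A))
      (hm : (fun X : A => (1/2 : ℝ) * g (X -ᵥ P) (X -ᵥ P)) ∈ Wg g A),
      C (evW g P) φ = φ ⟨fun X : A => (1/2 : ℝ) * g (X -ᵥ P) (X -ᵥ P), hm⟩ := by
  intro P φ hm
  -- Both sides are linear in `φ`, so it suffices to compare them on the evaluations.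
  have key : C (evW g P) = Module.Dual.eval ℝ (Wg g A)
      ⟨fun X : A => (1/2 : ℝ) * g (X -ᵥ P) (X -ᵥ P), hm⟩ := by
    refine LinearMap.ext_on_range (v := evW g) (span_evW g) fun Q => ?_
    exact cayleyMenger_evW_evW g C hC P Q
  rw [key]
  rfl
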